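/- Let n ≥ m ≥ 1 and let B_1,…,B_r ∈ ℝ^{n×m} satisfy Σ_{k=1}^r B_k^⊤B_k = I_m and Σ_{k=1}^r B_kB_k^⊤ ⪯ I_n. Let z_1,…,z_r be independent standard Gaussian real random variables on a probability space and set G = Σ_{k=1}^r z_k B_k. Then for every t > 0, ℙ(σmax(G) > t) ≤ 2m·e^{−t²/2}. -/

import Mathlib

open MeasureTheory ProbabilityTheory Matrix

/-- The largest singular value (spectral norm) of a real matrix. -/
noncomputable def sigmaMax {n m : ℕ} (G : Matrix (Fin n) (Fin m) ℝ) : ℝ :=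
  ‖LinearMap.toContinuousLinearMap (Matrix.toEuclideanLin G)‖

theorem integrable_pow_gaussianReal (q : ℕ) :
    Integrable (fun x : ℝ => x ^ q) (gaussianReal 0 1) := by
  rcases Nat.eq_zero_or_pos q with rfl | hq
  · simp
  · have h := (memLp_id_gaussianReal' (μ := 0) (v := 1) (q : ENNReal) (by simp)).integrable_norm_pow
      hq.ne'
    refine (integrable_norm_iff (by fun_prop)).1 ?_
    simpa using h

/-- Recurrence for the moments of the standard Gaussian distribution. -/
theorem integral_pow_succ_gaussianReal (q : ℕ) :
    ∫ x : ℝ, x ^ (q + 1) ∂gaussianReal 0 1 = q * ∫ x : ℝ, x ^ (q - 1) ∂gaussianReal 0 1 := by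
  have hintegrable (k : ℕ) : Integrable (fun x : ℝ => gaussianPDFReal 0 1 x * x ^ k) := by
    have h := integrable_pow_gaussianReal k
    rw [gaussianReal_of_var_ne_zero _ one_ne_zero,
      integrable_withDensity_iff_integrable_smul' (by fun_prop)
        (by simp [gaussianPDF])] at h
    simpa [gaussianPDF, ENNReal.toReal_ofReal (gaussianPDFReal_nonneg _ _ _)] using h
  have hpdf (x : ℝ) : HasDerivAt (gaussianPDFReal 0 1) (-x * gaussianPDFReal 0 1 x) x := by
    have h1 : HasDerivAt (fun y : ℝ => -(y - 0) ^ 2 / (2 * ((1 : NNReal) : ℝ))) (-x) x := by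
      have := (((hasDerivAt_id x).sub_const 0).pow 2).neg.div_const (2 * ((1 : NNReal) : ℝ))
      exact this.congr_deriv (by simp; ring)
    have h2 := h1.exp.const_mul (√(2 * Real.pi * ((1 : NNReal) : ℝ)))⁻¹
    exact h2.congr_deriv (by simp only [gaussianPDFReal]; ring)
  have hderiv (x : ℝ) : HasDerivAt (fun y : ℝ => gaussianPDFReal 0 1 y * y ^ q)
      (q * (gaussianPDFReal 0 1 x * x ^ (q - 1)) - gaussianPDFReal 0 1 x * x ^ (q + 1)) x := by
    exact ((hpdf x).mul (hasDerivAt_pow q x)).congr_deriv (by ring)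
  have h := integral_eq_zero_of_hasDerivAt_of_integrable hderiv
    (((hintegrable _).const_mul _).sub (hintegrable _)) (hintegrable q)
  rw [integral_sub ((hintegrable _).const_mul _) (hintegrable _), integral_const_mul] at h
  simp only [integral_gaussianReal_eq_integral_smul one_ne_zero, smul_eq_mul]
  linarith

/-- The standard Gaussian measure on `Fin r → ℝ`. -/
noncomputable abbrev stdGaussianPi (r : ℕ) : Measure (Fin r → ℝ) :=
  Measure.pi fun _ => gaussianReal 0 1

theorem integrable_eval_stdGaussianPi {r : ℕ} (p : MvPolynomial (Fin r) ℝ) :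
    Integrable (fun x => MvPolynomial.eval x p) (stdGaussianPi r) := by
  induction p using MvPolynomial.induction_on' with
  | monomial s c =>
    simp only [MvPolynomial.eval_monomial, Finsupp.prod_fintype _ _ fun _ => pow_zero _]
    exact (Integrable.fintype_prod fun i => integrable_pow_gaussianReal (s i)).const_mul c
  | add p q hp hq =>
    simp only [map_add]
    exact hp.add hq

theorem integral_eval_monomial_stdGaussianPi {r : ℕ} (s : Fin r →₀ ℕ) (c : ℝ) :
    ∫ x, MvPolynomial.eval x (MvPolynomial.monomial s c) ∂stdGaussianPi r
      = c * ∏ i, ∫ x : ℝ, x ^ s i ∂gaussianReal 0 1 := by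
  simp only [MvPolynomial.eval_monomial, Finsupp.prod_fintype _ _ fun _ => pow_zero _]
  rw [integral_const_mul, integral_fintype_prod_eq_prod (fun i (x : ℝ) => x ^ s i)]

/-- Gaussian integration by parts for polynomials. -/
theorem integral_eval_X_mul_stdGaussianPi {r : ℕ} (k : Fin r) (p : MvPolynomial (Fin r) ℝ) :
    ∫ x, MvPolynomial.eval x (MvPolynomial.X k * p) ∂stdGaussianPi r
      = ∫ x, MvPolynomial.eval x (MvPolynomial.pderiv k p) ∂stdGaussianPi r := by
  induction p using MvPolynomial.induction_on' with
  | monomial s c =>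
    rw [MvPolynomial.pderiv_monomial, MvPolynomial.X, MvPolynomial.monomial_mul,
      integral_eval_monomial_stdGaussianPi, integral_eval_monomial_stdGaussianPi,
      ← Finset.mul_prod_erase _ _ (Finset.mem_univ k),
      ← Finset.mul_prod_erase _ _ (Finset.mem_univ k)]
    have h1 : (Finsupp.single k 1 + s : Fin r →₀ ℕ) k = s k + 1 := by simp [add_comm]
    have h2 : (s - Finsupp.single k 1 : Fin r →₀ ℕ) k = s k - 1 := by simp
    rw [h1, h2, integral_pow_succ_gaussianReal]
    have h3 : ∀ i ∈ Finset.univ.erase k,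
        ∫ x : ℝ, x ^ (Finsupp.single k 1 + s : Fin r →₀ ℕ) i ∂gaussianReal 0 1
          = ∫ x : ℝ, x ^ (s - Finsupp.single k 1 : Fin r →₀ ℕ) i ∂gaussianReal 0 1 := by
      intro i hi
      have : k ≠ i := (Finset.ne_of_mem_erase hi).symm
      simp [Finsupp.single_eq_of_ne' this]
    rw [Finset.prod_congr rfl h3]
    ring
  | add p q hp hq =>
    simp only [mul_add, map_add] at hp hq ⊢
    rw [integral_add (integrable_eval_stdGaussianPi _) (integrable_eval_stdGaussianPi _),
      integral_add (integrable_eval_stdGaussianPi _) (integrable_eval_stdGaussianPi _), hp, hq]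

theorem Matrix.IsSymm.exists_orthogonal_diagonalization {ι : Type*} [Fintype ι] [DecidableEq ι]
    {X : Matrix ι ι ℝ} (hX : X.IsSymm) :
    ∃ (U : Matrix ι ι ℝ) (d : ι → ℝ), Uᵀ * U = 1 ∧ U * Uᵀ = 1 ∧
      ∀ q : ℕ, X ^ q = U * diagonal (d ^ q) * Uᵀ := by
  have hH : X.IsHermitian := by
    rw [IsHermitian, conjTranspose_eq_transpose_of_trivial, hX.eq]
  have hU := hH.eigenvectorUnitary.2
  rw [mem_unitaryGroup_iff', star_eq_conjTranspose, conjTranspose_eq_transpose_of_trivial] at hU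
  have hU' := hH.eigenvectorUnitary.2
  rw [mem_unitaryGroup_iff, star_eq_conjTranspose, conjTranspose_eq_transpose_of_trivial] at hU'
  refine ⟨hH.eigenvectorUnitary, hH.eigenvalues, hU, hU', fun q => ?_⟩
  have hsp := hH.spectral_theorem
  rw [Unitary.conjStarAlgAut_apply, star_eq_conjTranspose,
    conjTranspose_eq_transpose_of_trivial] at hsp
  induction q with
  | zero => simp [hU']
  | succ q ih =>
    set U : Matrix ι ι ℝ := (hH.eigenvectorUnitary : Matrix ι ι ℝ)
    calc X ^ (q + 1)
        = U * diagonal (hH.eigenvalues ^ q) * Uᵀ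
          * (U * diagonal (RCLike.ofReal ∘ hH.eigenvalues) * Uᵀ) := by rw [pow_succ, ih, ← hsp]
      _ = U * diagonal (hH.eigenvalues ^ q) * (Uᵀ * U)
            * diagonal (RCLike.ofReal ∘ hH.eigenvalues) * Uᵀ := by simp only [Matrix.mul_assoc]
      _ = _ := by
        rw [hU, Matrix.mul_one, Matrix.mul_assoc U, diagonal_mul_diagonal]
        rfl

theorem pow_mul_pow_add_le_of_even (a b : ℝ) {i j p : ℕ} (h : i + j = 2 * p) :
    a ^ i * b ^ j + a ^ j * b ^ i ≤ a ^ (2 * p) + b ^ (2 * p) := by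
  have key : 0 ≤ (|a| ^ i - |b| ^ i) * (|a| ^ j - |b| ^ j) := by
    rcases le_total |a| |b| with hab | hab
    · exact mul_nonneg_of_nonpos_of_nonpos (sub_nonpos.2 (by gcongr)) (sub_nonpos.2 (by gcongr))
    · exact mul_nonneg (sub_nonneg.2 (by gcongr)) (sub_nonneg.2 (by gcongr))
  have h1 : a ^ i * b ^ j ≤ |a| ^ i * |b| ^ j := by
    rw [← abs_pow, ← abs_pow, ← abs_mul]; exact le_abs_self _
  have h2 : a ^ j * b ^ i ≤ |a| ^ j * |b| ^ i := by
    rw [← abs_pow, ← abs_pow, ← abs_mul]; exact le_abs_self _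
  have h3 (c : ℝ) : c ^ (2 * p) = |c| ^ i * |c| ^ j := by
    rw [← pow_add, h, pow_mul, pow_mul, sq_abs]
  rw [h3, h3]
  linarith

/-- Moving the factors of an even power of a symmetric matrix together increases the trace. -/
theorem trace_mul_pow_mul_mul_pow_le {ι : Type*} [Fintype ι] [DecidableEq ι]
    {A X : Matrix ι ι ℝ} (hA : A.IsSymm) (hX : X.IsSymm) {i j p : ℕ} (h : i + j = 2 * p) :
    (A * X ^ i * A * X ^ j).trace ≤ (A * A * X ^ (2 * p)).trace := by
  obtain ⟨U, d, -, hU, hpow⟩ := hX.exists_orthogonal_diagonalization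
  set C := Uᵀ * A * U with hC
  have hCs (a b : ι) : C b a = C a b := by
    have : Cᵀ = C := by simp [hC, transpose_mul, Matrix.mul_assoc, hA.eq]
    exact congrFun (congrFun this a) b
  have expand (k l : ℕ) :
      (A * X ^ k * A * X ^ l).trace = ∑ a, ∑ b, C a b ^ 2 * (d b ^ k * d a ^ l) := by
    have : (A * X ^ k * A * X ^ l).trace
        = (C * diagonal (d ^ k) * (C * diagonal (d ^ l))).trace := by
      rw [hpow, hpow, hC]
      simp only [Matrix.mul_assoc]
      rw [trace_mul_comm Uᵀ]
      simp only [Matrix.mul_assoc]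
    rw [this]
    simp only [trace, diag_apply, mul_apply (M := C * _), mul_diagonal]
    refine Finset.sum_congr rfl fun a _ => Finset.sum_congr rfl fun b _ => ?_
    rw [hCs a b]
    simp only [Pi.pow_apply]
    ring
  have symm (k l : ℕ) : (A * X ^ k * A * X ^ l).trace = (A * X ^ l * A * X ^ k).trace := by
    rw [Matrix.mul_assoc (A * X ^ k), trace_mul_comm]
    simp only [Matrix.mul_assoc]
  have hsum (k l : ℕ) : 2 * (A * X ^ k * A * X ^ l).trace
      = ∑ a, ∑ b, C a b ^ 2 * (d a ^ k * d b ^ l + d a ^ l * d b ^ k) := by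
    calc 2 * (A * X ^ k * A * X ^ l).trace
        = (A * X ^ k * A * X ^ l).trace + (A * X ^ l * A * X ^ k).trace := by
          rw [symm l k, two_mul]
      _ = _ := by
          rw [expand, expand, ← Finset.sum_add_distrib]
          refine Finset.sum_congr rfl fun a _ => ?_
          rw [← Finset.sum_add_distrib]
          exact Finset.sum_congr rfl fun b _ => by ring
  have h0 := hsum (2 * p) 0
  rw [symm, pow_zero, Matrix.mul_one] at h0
  have hij := hsum i j
  have hle : ∑ a, ∑ b, C a b ^ 2 * (d a ^ i * d b ^ j + d a ^ j * d b ^ i)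
      ≤ ∑ a, ∑ b, C a b ^ 2 * (d a ^ (2 * p) * d b ^ 0 + d a ^ 0 * d b ^ (2 * p)) := by
    refine Finset.sum_le_sum fun a _ => Finset.sum_le_sum fun b _ =>
      mul_le_mul_of_nonneg_left ?_ (sq_nonneg _)
    simpa using pow_mul_pow_add_le_of_even (d a) (d b) h
  linarith

theorem trace_mul_pow_le {ι : Type*} [Fintype ι] [DecidableEq ι]
    {V X : Matrix ι ι ℝ} (hV : (1 - V).PosSemidef) (hX : X.IsSymm) (p : ℕ) :
    (V * X ^ (2 * p)).trace ≤ (X ^ (2 * p)).trace := by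
  have h := (hV.conjTranspose_mul_mul_same (X ^ p)).trace_nonneg
  rw [conjTranspose_eq_transpose_of_trivial, transpose_pow, hX.eq, Matrix.mul_assoc,
    trace_mul_comm, Matrix.mul_assoc, ← pow_add, ← two_mul, Matrix.sub_mul, trace_sub,
    Matrix.one_mul] at h
  linarith

theorem le_trace_pow_of_lt_sigmaMax {n m : ℕ} (G : Matrix (Fin n) (Fin m) ℝ) {t : ℝ} (ht : 0 < t)
    (h : t < sigmaMax G) (p : ℕ) :
    t ^ (2 * p) ≤ ((Gᵀ * G) ^ p).trace := by
  have hWs : (Gᵀ * G).IsSymm := by simp [IsSymm, transpose_mul]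
  obtain ⟨U, d, hU, hU', hpow⟩ := hWs.exists_orthogonal_diagonalization
  have hW : Gᵀ * G = U * diagonal d * Uᵀ := by simpa using hpow 1
  have hdot {k : ℕ} (M : Matrix (Fin k) (Fin m) ℝ) (y : Fin m → ℝ) (w : Fin k → ℝ) :
      (M *ᵥ y) ⬝ᵥ w = y ⬝ᵥ (Mᵀ *ᵥ w) := by
    rw [dotProduct_mulVec, vecMul_transpose]
  have hquad (y : Fin m → ℝ) : (G *ᵥ y) ⬝ᵥ (G *ᵥ y) = ∑ i, d i * (Uᵀ *ᵥ y) i ^ 2 := by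
    have : (G *ᵥ y) ⬝ᵥ (G *ᵥ y) = (Uᵀ *ᵥ y) ⬝ᵥ (diagonal d *ᵥ (Uᵀ *ᵥ y)) := by
      rw [hdot, hdot, mulVec_mulVec, hW, transpose_transpose]
      simp only [mulVec_mulVec, Matrix.mul_assoc]
    rw [this]
    simp only [dotProduct, mulVec_diagonal]
    exact Finset.sum_congr rfl fun i _ => by ring
  have hnorm (y : Fin m → ℝ) : ∑ i, (Uᵀ *ᵥ y) i ^ 2 = ∑ i, y i ^ 2 := by
    have : (Uᵀ *ᵥ y) ⬝ᵥ (Uᵀ *ᵥ y) = y ⬝ᵥ y := by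
      rw [hdot, mulVec_mulVec, transpose_transpose, hU', one_mulVec]
    simpa [dotProduct, sq] using this
  have hd (i : Fin m) : 0 ≤ d i := by
    have := hquad (U *ᵥ Pi.single i 1)
    rw [mulVec_mulVec _ Uᵀ, hU, one_mulVec] at this
    have h2 : 0 ≤ (G *ᵥ (U *ᵥ Pi.single i 1)) ⬝ᵥ (G *ᵥ (U *ᵥ Pi.single i 1)) :=
      Finset.sum_nonneg fun j _ => mul_self_nonneg _
    rw [this] at h2
    simpa [Pi.single_apply] using h2
  obtain ⟨i, hi⟩ : ∃ i, t ^ 2 < d i := by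
    by_contra! hle
    refine h.not_ge (ContinuousLinearMap.opNorm_le_bound _ ht.le fun x => ?_)
    refine le_of_sq_le_sq ?_ (by positivity)
    rw [mul_pow, EuclideanSpace.norm_sq_eq, EuclideanSpace.norm_sq_eq]
    have := hquad x.ofLp
    simp only [Real.norm_eq_abs, sq_abs]
    calc _ = (G *ᵥ x.ofLp) ⬝ᵥ (G *ᵥ x.ofLp) := by
          simp [dotProduct, sq]
      _ = _ := this
      _ ≤ ∑ i, t ^ 2 * (Uᵀ *ᵥ x.ofLp) i ^ 2 := by gcongr with i _; exact hle i
      _ = _ := by rw [← Finset.mul_sum, hnorm]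
  rw [hpow, Matrix.mul_assoc, trace_mul_comm, Matrix.mul_assoc, hU, Matrix.mul_one, trace_diagonal,
    pow_mul]
  calc (t ^ 2) ^ p ≤ d i ^ p := by gcongr
    _ ≤ ∑ i, d i ^ p :=
      Finset.single_le_sum (f := fun i => d i ^ p) (fun i _ => pow_nonneg (hd i) p)
        (Finset.mem_univ i)

theorem Matrix.map_derivation_mul {R : Type*} [CommRing R] [Algebra ℝ R] {ι κ l : Type*}
    [Fintype κ] (D : Derivation ℝ R R) (M : Matrix ι κ R) (N : Matrix κ l R) :
    (M * N).map D = M.map D * N + M * N.map D := by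
  ext i j
  simp only [map_apply, mul_apply, add_apply, map_sum, Derivation.leibniz, smul_eq_mul,
    ← Finset.sum_add_distrib]
  exact Finset.sum_congr rfl fun _ _ => by ring

theorem Matrix.map_derivation_pow {R : Type*} [CommRing R] [Algebra ℝ R] {ι : Type*}
    [Fintype ι] [DecidableEq ι] (D : Derivation ℝ R R) (M : Matrix ι ι R) (q : ℕ) :
    (M ^ q).map D = ∑ i ∈ Finset.range q, M ^ i * M.map D * M ^ (q - 1 - i) := by
  induction q with
  | zero =>
    ext i j
    by_cases h : i = j <;> simp [h]
  | succ q ih =>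
    rw [pow_succ, map_derivation_mul, ih, Finset.sum_range_succ, Finset.sum_mul]
    congr 1
    · refine Finset.sum_congr rfl fun i hi => ?_
      have : q + 1 - 1 - i = q - 1 - i + 1 := by have := Finset.mem_range.1 hi; omega
      rw [this, pow_succ, Matrix.mul_assoc _ (M ^ (q - 1 - i))]
    · simp

/-- The matrix series `∑ₖ Xₖ Aₖ` with polynomial entries. -/
noncomputable def polySeries {ι κ : Type*} {r : ℕ} (A : Fin r → Matrix ι κ ℝ) :
    Matrix ι κ (MvPolynomial (Fin r) ℝ) :=
  ∑ k, (MvPolynomial.X k : MvPolynomial (Fin r) ℝ) • (A k).map MvPolynomial.C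

theorem polySeries_map_eval {ι κ : Type*} {r : ℕ} (A : Fin r → Matrix ι κ ℝ) (x : Fin r → ℝ) :
    (polySeries A).map (MvPolynomial.eval x) = ∑ k, x k • A k := by
  ext i j
  simp [polySeries, Matrix.sum_apply]

theorem polySeries_map_pderiv {ι κ : Type*} {r : ℕ} (A : Fin r → Matrix ι κ ℝ) (k : Fin r) :
    (polySeries A).map (MvPolynomial.pderiv k) = (A k).map MvPolynomial.C := by
  ext i j : 2
  simp [polySeries, Matrix.sum_apply, MvPolynomial.pderiv_X, Pi.single_apply]

theorem isSymm_series {ι : Type*} {r : ℕ} {A : Fin r → Matrix ι ι ℝ}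
    (hA : ∀ k, (A k).IsSymm) (x : Fin r → ℝ) :
    (∑ k, x k • A k).IsSymm := by
  simp only [IsSymm, transpose_sum, transpose_smul, fun k => (hA k).eq]

section

variable {ι : Type*} [Fintype ι] [DecidableEq ι] {r : ℕ}

theorem eval_trace_word (A : Fin r → Matrix ι ι ℝ) (M N : Matrix ι ι ℝ) (i j : ℕ)
    (x : Fin r → ℝ) :
    MvPolynomial.eval x (M.map MvPolynomial.C * polySeries A ^ i * N.map MvPolynomial.C
        * polySeries A ^ j).trace
      = (M * (∑ k, x k • A k) ^ i * N * (∑ k, x k • A k) ^ j).trace := by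
  have hC (L : Matrix ι ι ℝ) :
      (L.map (MvPolynomial.C (σ := Fin r))).map (MvPolynomial.eval x) = L := by
    ext; simp
  have hP (q : ℕ) : (polySeries A ^ q).map (MvPolynomial.eval x) = (∑ k, x k • A k) ^ q := by
    rw [← polySeries_map_eval]
    exact map_pow (MvPolynomial.eval x).mapMatrix (polySeries A) q
  rw [AddMonoidHom.map_trace (MvPolynomial.eval x)]
  simp only [Matrix.map_mul, hC, hP]

theorem integrable_trace_word (A : Fin r → Matrix ι ι ℝ) (M N : Matrix ι ι ℝ) (i j : ℕ) :
    Integrable (fun x => (M * (∑ k, x k • A k) ^ i * N * (∑ k, x k • A k) ^ j).trace)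
      (stdGaussianPi r) :=
  (integrable_eval_stdGaussianPi _).congr (ae_of_all _ (eval_trace_word A M N i j))

theorem integrable_trace_mul_pow (A : Fin r → Matrix ι ι ℝ) (M : Matrix ι ι ℝ) (q : ℕ) :
    Integrable (fun x => (M * (∑ k, x k • A k) ^ q).trace) (stdGaussianPi r) := by
  simpa using integrable_trace_word A M 1 0 q

theorem integrable_trace_pow (A : Fin r → Matrix ι ι ℝ) (q : ℕ) :
    Integrable (fun x => ((∑ k, x k • A k) ^ q).trace) (stdGaussianPi r) := by
  simpa using integrable_trace_mul_pow A 1 q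

/-- Gaussian integration by parts for the trace moments of a matrix Gaussian series. -/
theorem integral_trace_pow_succ (A : Fin r → Matrix ι ι ℝ) (q : ℕ) :
    ∫ x, ((∑ k, x k • A k) ^ (q + 1)).trace ∂stdGaussianPi r
      = ∑ k, ∑ i ∈ Finset.range q, ∫ x,
          (A k * (∑ k, x k • A k) ^ i * A k * (∑ k, x k • A k) ^ (q - 1 - i)).trace
            ∂stdGaussianPi r := by
  have hpoly (k : Fin r) : MvPolynomial.pderiv k
      ((A k).map MvPolynomial.C * polySeries A ^ q).trace
      = ∑ i ∈ Finset.range q, ((A k).map MvPolynomial.C * polySeries A ^ i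
          * (A k).map MvPolynomial.C * polySeries A ^ (q - 1 - i)).trace := by
    have h0 : ((A k).map (MvPolynomial.C (σ := Fin r))).map (MvPolynomial.pderiv k) = 0 := by
      ext i j : 2; simp
    rw [AddMonoidHom.map_trace (MvPolynomial.pderiv k), map_derivation_mul, h0, Matrix.zero_mul,
      zero_add, map_derivation_pow, polySeries_map_pderiv, Finset.mul_sum, trace_sum]
    simp only [Matrix.mul_assoc]
  have hx (x : Fin r → ℝ) : ((∑ k, x k • A k) ^ (q + 1)).trace
      = ∑ k, MvPolynomial.eval x (MvPolynomial.X k *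
          ((A k).map MvPolynomial.C * polySeries A ^ q).trace) := by
    have h (k : Fin r) := eval_trace_word A (A k) 1 0 q x
    simp only [pow_zero, Matrix.mul_one, Matrix.map_one _ (map_zero _) (map_one _)] at h
    simp only [map_mul, MvPolynomial.eval_X, h]
    rw [pow_succ', Finset.sum_mul, trace_sum]
    simp [trace_smul]
  simp only [hx]
  rw [integral_finsetSum _ fun _ _ => integrable_eval_stdGaussianPi _]
  refine Finset.sum_congr rfl fun k _ => ?_
  rw [integral_eval_X_mul_stdGaussianPi, hpoly]
  simp only [map_sum, eval_trace_word]
  exact integral_finsetSum _ fun _ _ => integrable_trace_word A _ _ _ _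

theorem integral_trace_pow_le {A : Fin r → Matrix ι ι ℝ} (hA : ∀ k, (A k).IsSymm) (p : ℕ) :
    ∫ x, ((∑ k, x k • A k) ^ (2 * (p + 1))).trace ∂stdGaussianPi r
      ≤ (2 * p + 1) * ∫ x, ((∑ k, A k * A k) * (∑ k, x k • A k) ^ (2 * p)).trace
          ∂stdGaussianPi r := by
  rw [show 2 * (p + 1) = (2 * p + 1) + 1 by ring, integral_trace_pow_succ]
  calc _ ≤ ∑ k, ∑ i ∈ Finset.range (2 * p + 1),
        ∫ x, (A k * A k * (∑ k, x k • A k) ^ (2 * p)).trace ∂stdGaussianPi r := by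
        refine Finset.sum_le_sum fun k _ => Finset.sum_le_sum fun i hi => ?_
        refine integral_mono (integrable_trace_word A _ _ _ _) (integrable_trace_mul_pow A _ _)
          fun x => trace_mul_pow_mul_mul_pow_le (hA k) (isSymm_series hA x) ?_
        have := Finset.mem_range.1 hi
        omega
    _ = _ := by
        simp only [Finset.sum_mul, trace_sum]
        rw [integral_finsetSum _ fun _ _ => integrable_trace_mul_pow A _ _, Finset.mul_sum]
        simp

/-- Even trace moments of a Gaussian series with symmetric coefficients and `∑ₖ Aₖ² ⪯ I`. -/
theorem integral_trace_pow_le_factorial {A : Fin r → Matrix ι ι ℝ} (hA : ∀ k, (A k).IsSymm)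
    (hV : (1 - ∑ k, A k * A k).PosSemidef) (p : ℕ) :
    ∫ x, ((∑ k, x k • A k) ^ (2 * (p + 1))).trace ∂stdGaussianPi r
      ≤ (2 * (p + 1)).factorial / (2 ^ (p + 1) * (p + 1).factorial)
        * (∑ k, A k * A k).trace := by
  induction p with
  | zero =>
    refine (integral_trace_pow_le hA 0).trans_eq ?_
    simp [Nat.factorial]
  | succ p ih =>
    refine (integral_trace_pow_le hA (p + 1)).trans ?_
    have h : ∫ x, ((∑ k, A k * A k) * (∑ k, x k • A k) ^ (2 * (p + 1))).trace ∂stdGaussianPi r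
        ≤ ∫ x, ((∑ k, x k • A k) ^ (2 * (p + 1))).trace ∂stdGaussianPi r :=
      integral_mono (integrable_trace_mul_pow A _ _) (integrable_trace_pow A _)
        fun x => trace_mul_pow_le hV (isSymm_series hA x) _
    calc _ ≤ (2 * ((p + 1 : ℕ) : ℝ) + 1) * ((2 * (p + 1)).factorial
          / (2 ^ (p + 1) * (p + 1).factorial) * (∑ k, A k * A k).trace) := by
          gcongr
          exact h.trans ih
      _ = _ := by
          rw [show 2 * (p + 1 + 1) = 2 * (p + 1) + 1 + 1 by ring, Nat.factorial_succ (_ + 1),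
            Nat.factorial_succ (2 * (p + 1)), Nat.factorial_succ (p + 1)]
          push_cast
          field_simp
          ring

end

/-- The symmetric dilation of a rectangular matrix. -/
def symmDilation {n m : ℕ} (G : Matrix (Fin n) (Fin m) ℝ) :
    Matrix (Fin n ⊕ Fin m) (Fin n ⊕ Fin m) ℝ :=
  fromBlocks 0 G Gᵀ 0

section

variable {n m r : ℕ}

theorem isSymm_symmDilation (G : Matrix (Fin n) (Fin m) ℝ) : (symmDilation G).IsSymm := by
  simp [symmDilation, IsSymm, fromBlocks_transpose]

theorem symmDilation_mul_self (G : Matrix (Fin n) (Fin m) ℝ) :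
    symmDilation G * symmDilation G = fromBlocks (G * Gᵀ) 0 0 (Gᵀ * G) := by
  simp [symmDilation, fromBlocks_multiply]

theorem sum_smul_symmDilation (B : Fin r → Matrix (Fin n) (Fin m) ℝ) (x : Fin r → ℝ) :
    ∑ k, x k • symmDilation (B k) = symmDilation (∑ k, x k • B k) := by
  ext (i | i) (j | j) <;> simp [symmDilation, Matrix.sum_apply]

theorem sum_symmDilation_mul_self (B : Fin r → Matrix (Fin n) (Fin m) ℝ) :
    ∑ k, symmDilation (B k) * symmDilation (B k)
      = fromBlocks (∑ k, B k * (B k)ᵀ) 0 0 (∑ k, (B k)ᵀ * B k) := by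
  simp only [symmDilation_mul_self]
  ext (i | i) (j | j) <;> simp [Matrix.sum_apply]

theorem trace_fromBlocks_eq_add (A : Matrix (Fin n) (Fin n) ℝ) (B : Matrix (Fin n) (Fin m) ℝ)
    (C : Matrix (Fin m) (Fin n) ℝ) (D : Matrix (Fin m) (Fin m) ℝ) :
    (fromBlocks A B C D).trace = A.trace + D.trace := by
  simp [trace]

theorem trace_symmDilation_pow (G : Matrix (Fin n) (Fin m) ℝ) (p : ℕ) :
    (symmDilation G ^ (2 * (p + 1))).trace = 2 * ((Gᵀ * G) ^ (p + 1)).trace := by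
  have hcomm (q : ℕ) : (G * Gᵀ) ^ q * G = G * (Gᵀ * G) ^ q := by
    induction q with
    | zero => simp
    | succ q ih =>
      rw [pow_succ', pow_succ', Matrix.mul_assoc, ih]
      simp only [Matrix.mul_assoc]
  have htrace : ((G * Gᵀ) ^ (p + 1)).trace = ((Gᵀ * G) ^ (p + 1)).trace := by
    rw [pow_succ, ← Matrix.mul_assoc, hcomm, trace_mul_comm, ← Matrix.mul_assoc, ← pow_succ']
  rw [pow_mul, pow_two, symmDilation_mul_self, fromBlocks_diagonal_pow,
    trace_fromBlocks_eq_add, htrace, two_mul]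

/-- Trace moments of `Gᵀ G` for a Gaussian series `G` with `∑ₖ Bₖᵀ Bₖ = I` and
`∑ₖ Bₖ Bₖᵀ ⪯ I`. -/
theorem integral_trace_transpose_mul_self_pow_le (B : Fin r → Matrix (Fin n) (Fin m) ℝ)
    (hBtB : ∑ k, (B k)ᵀ * B k = 1)
    (hBBt : ((1 : Matrix (Fin n) (Fin n) ℝ) - ∑ k, B k * (B k)ᵀ).PosSemidef) (p : ℕ) :
    Integrable (fun x => (((∑ k, x k • B k)ᵀ * ∑ k, x k • B k) ^ p).trace) (stdGaussianPi r) ∧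
    ∫ x, (((∑ k, x k • B k)ᵀ * ∑ k, x k • B k) ^ p).trace ∂stdGaussianPi r
      ≤ (2 * p).factorial / (2 ^ p * p.factorial) * m := by
  cases p with
  | zero => simp
  | succ p =>
    have hV : (1 - ∑ k, symmDilation (B k) * symmDilation (B k)).PosSemidef := by
      have h := hBBt.conjTranspose_mul_mul_same
        (fromCols 1 0 : Matrix (Fin n) (Fin n ⊕ Fin m) ℝ)
      convert h using 1
      rw [sum_symmDilation_mul_self, hBtB]
      ext (i | i) (j | j) <;>
        simp [transpose_fromCols, fromRows_mul, one_apply]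
    have htr : (∑ k, symmDilation (B k) * symmDilation (B k)).trace = 2 * m := by
      have hcomm : (∑ k, B k * (B k)ᵀ).trace = (∑ k, (B k)ᵀ * B k).trace := by
        rw [trace_sum, trace_sum]
        exact Finset.sum_congr rfl fun k _ => trace_mul_comm _ _
      rw [sum_symmDilation_mul_self, trace_fromBlocks_eq_add, hcomm, hBtB]
      simp [two_mul]
    have hx (x : Fin r → ℝ) : (((∑ k, x k • B k)ᵀ * ∑ k, x k • B k) ^ (p + 1)).trace
        = 2⁻¹ * ((∑ k, x k • symmDilation (B k)) ^ (2 * (p + 1))).trace := by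
      rw [sum_smul_symmDilation, trace_symmDilation_pow]
      ring
    simp only [hx]
    refine ⟨(integrable_trace_pow _ _).const_mul _, ?_⟩
    have h := integral_trace_pow_le_factorial (fun k => isSymm_symmDilation (B k)) hV p
    rw [htr] at h
    rw [integral_const_mul]
    linarith

theorem trace_transpose_mul_self_pow_nonneg (G : Matrix (Fin n) (Fin m) ℝ) (p : ℕ) :
    0 ≤ ((Gᵀ * G) ^ p).trace := by
  have h : (Gᵀ * G).PosSemidef := by
    simpa [conjTranspose_eq_transpose_of_trivial] using posSemidef_conjTranspose_mul_self G
  exact (h.pow p).trace_nonneg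

/-- The bound `𝔼 ∑ᵢ cosh (t σᵢ(G)) ≤ m e^{t²/2}` on the singular values of a Gaussian series, with
`cosh` written as a power series. -/
theorem lintegral_tsum_trace_pow_le (B : Fin r → Matrix (Fin n) (Fin m) ℝ)
    (hBtB : ∑ k, (B k)ᵀ * B k = 1)
    (hBBt : ((1 : Matrix (Fin n) (Fin n) ℝ) - ∑ k, B k * (B k)ᵀ).PosSemidef) (t : ℝ) :
    ∫⁻ x, ∑' p : ℕ, ENNReal.ofReal (t ^ (2 * p) / (2 * p).factorial
        * (((∑ k, x k • B k)ᵀ * ∑ k, x k • B k) ^ p).trace) ∂stdGaussianPi r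
      ≤ ENNReal.ofReal (m * Real.exp (t ^ 2 / 2)) := by
  have hmom := integral_trace_transpose_mul_self_pow_le B hBtB hBBt
  have ht (p : ℕ) : 0 ≤ t ^ (2 * p) := by rw [pow_mul]; positivity
  rw [lintegral_tsum fun p =>
    ((hmom p).1.const_mul (t ^ (2 * p) / (2 * p).factorial)).aemeasurable.ennreal_ofReal]
  have hexp : HasSum (fun p : ℕ => (m : ℝ) * ((t ^ 2 / 2) ^ p / p.factorial))
      (m * Real.exp (t ^ 2 / 2)) := by
    rw [Real.exp_eq_exp_ℝ]
    exact (NormedSpace.expSeries_div_hasSum_exp (t ^ 2 / 2 : ℝ)).mul_left (m : ℝ)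
  rw [← hexp.tsum_eq, ENNReal.ofReal_tsum_of_nonneg (fun p => by positivity) hexp.summable]
  refine ENNReal.tsum_le_tsum fun p => ?_
  rw [← ofReal_integral_eq_lintegral_ofReal ((hmom p).1.const_mul _)
    (ae_of_all _ fun x => mul_nonneg (div_nonneg (ht p) (by positivity))
      (trace_transpose_mul_self_pow_nonneg _ _)), integral_const_mul]
  refine ENNReal.ofReal_le_ofReal ?_
  calc _ ≤ t ^ (2 * p) / (2 * p).factorial
        * ((2 * p).factorial / (2 ^ p * p.factorial) * m) :=
        mul_le_mul_of_nonneg_left (hmom p).2 (div_nonneg (ht p) (by positivity))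
    _ = _ := by
        rw [pow_mul, div_pow (t ^ 2)]
        field_simp

theorem ofReal_exp_div_two_le_tsum_of_lt_sigmaMax (G : Matrix (Fin n) (Fin m) ℝ) {t : ℝ}
    (ht : 0 < t) (h : t < sigmaMax G) :
    ENNReal.ofReal (Real.exp (t ^ 2) / 2)
      ≤ ∑' p : ℕ, ENNReal.ofReal (t ^ (2 * p) / (2 * p).factorial * ((Gᵀ * G) ^ p).trace) := by
  have hcosh := Real.hasSum_cosh (t ^ 2)
  calc ENNReal.ofReal (Real.exp (t ^ 2) / 2) ≤ ENNReal.ofReal (Real.cosh (t ^ 2)) := by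
        refine ENNReal.ofReal_le_ofReal ?_
        rw [Real.cosh_eq]
        linarith [Real.exp_pos (-(t ^ 2))]
    _ ≤ _ := by
        rw [← hcosh.tsum_eq, ENNReal.ofReal_tsum_of_nonneg (fun p => by positivity) hcosh.summable]
        refine ENNReal.tsum_le_tsum fun p => ENNReal.ofReal_le_ofReal ?_
        have := le_trace_pow_of_lt_sigmaMax G ht h p
        calc (t ^ 2) ^ (2 * p) / ((2 * p).factorial : ℝ)
            = t ^ (2 * p) / (2 * p).factorial * t ^ (2 * p) := by ring
          _ ≤ _ := by gcongr

end

/-- Lemma 2.1, tail bound.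
For a Gaussian matrix series `G = ∑ₖ zₖ Bₖ` with `∑ₖ Bₖᵀ Bₖ = Iₘ` and
`∑ₖ Bₖ Bₖᵀ ⪯ Iₙ`, for every `t > 0` we have `ℙ(σmax(G) > t) ≤ 2m e^{-t²/2}`. -/
theorem stmt2 {n m r : ℕ} (hm : 1 ≤ m) (hmn : m ≤ n)
    (B : Fin r → Matrix (Fin n) (Fin m) ℝ)
    (hBtB : ∑ k, (B k)ᵀ * B k = 1)
    (hBBt : ((1 : Matrix (Fin n) (Fin n) ℝ) - ∑ k, B k * (B k)ᵀ).PosSemidef)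
    {Ω : Type*} [MeasurableSpace Ω] (μ : Measure Ω) [IsProbabilityMeasure μ]
    (z : Fin r → Ω → ℝ)
    (hindep : iIndepFun z μ)
    (hgauss : ∀ k, Measure.map (z k) μ = gaussianReal 0 1) :
    ∀ t : ℝ, 0 < t →
      μ {ω | t < sigmaMax (∑ k, z k ω • B k)}
        ≤ ENNReal.ofReal (2 * m * Real.exp (-t ^ 2 / 2)) := by
  intro t ht
  have hz (k : Fin r) : AEMeasurable (z k) μ :=
    aemeasurable_of_map_neZero (by rw [hgauss]; infer_instance)
  have hlaw : μ.map (fun ω k => z k ω) = stdGaussianPi r := by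
    rw [(iIndepFun_iff_map_fun_eq_pi_map hz).1 hindep]
    simp only [hgauss]
  set F : (Fin r → ℝ) → ENNReal := fun x => ∑' p : ℕ,
    ENNReal.ofReal (t ^ (2 * p) / (2 * p).factorial
      * (((∑ k, x k • B k)ᵀ * ∑ k, x k • B k) ^ p).trace)
  have hFm : AEMeasurable F (μ.map fun ω k => z k ω) := by
    rw [hlaw]
    exact AEMeasurable.tsum fun p =>
      ((integral_trace_transpose_mul_self_pow_le B hBtB hBBt p).1.const_mul
        (t ^ (2 * p) / (2 * p).factorial)).aemeasurable.ennreal_ofReal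
  have hzm : AEMeasurable (fun ω k => z k ω) μ := aemeasurable_pi_lambda _ hz
  have hFle : ∫⁻ ω, F (fun k => z k ω) ∂μ ≤ ENNReal.ofReal (m * Real.exp (t ^ 2 / 2)) := by
    rw [← lintegral_map' hFm hzm, hlaw]
    exact lintegral_tsum_trace_pow_le B hBtB hBBt t
  have hpos : 0 < Real.exp (t ^ 2) / 2 := by positivity
  calc μ {ω | t < sigmaMax (∑ k, z k ω • B k)}
      ≤ μ {ω | ENNReal.ofReal (Real.exp (t ^ 2) / 2) ≤ F fun k => z k ω} :=
        measure_mono fun ω hω => ofReal_exp_div_two_le_tsum_of_lt_sigmaMax _ ht hω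
    _ ≤ (∫⁻ ω, F (fun k => z k ω) ∂μ) / ENNReal.ofReal (Real.exp (t ^ 2) / 2) :=
        meas_ge_le_lintegral_div (hFm.comp_aemeasurable hzm)
          (by simpa using hpos) ENNReal.ofReal_ne_top
    _ ≤ ENNReal.ofReal (m * Real.exp (t ^ 2 / 2)) / ENNReal.ofReal (Real.exp (t ^ 2) / 2) := by
        gcongr
    _ = ENNReal.ofReal (2 * m * Real.exp (-t ^ 2 / 2)) := by
        rw [← ENNReal.ofReal_div_of_pos hpos]
        congr 1
        rw [show -t ^ 2 / 2 = t ^ 2 / 2 - t ^ 2 by ring, Real.exp_sub]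
        field_simp
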